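/- There exists a subshift Σ with h_ℳ(Σ) = 0 (vanishing entropy of minimal forbidden words) and yet h*_𝒞(Σ) = h_top(Σ) > 0. -/

import Mathlib

open Filter Set MeasureTheory

namespace QFTPaper

variable {A : Type*} {B : Type*}

/-- The left shift on bi-infinite sequences over the alphabet `A`. -/
def shift (x : ℤ → A) : ℤ → A := fun n => x (n + 1)

/-- A subshift: a closed, shift-invariant subset of `A^ℤ`. -/
def IsSubshift [TopologicalSpace A] (X : Set (ℤ → A)) : Prop :=
  IsClosed X ∧ shift '' X = X

/-- The finite word `w` occurs in `x` at position `k`. -/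
def OccursAt (w : List A) (x : ℤ → A) (k : ℤ) : Prop :=
  ∀ i : Fin w.length, x (k + (i : ℕ)) = w.get i

/-- The language of `X`: words of length `n` occurring in elements of `X`
(at position `0`, which is no restriction by shift-invariance). -/
def Lang (X : Set (ℤ → A)) (n : ℕ) : Set (List A) :=
  { w | w.length = n ∧ ∃ x ∈ X, OccursAt w x 0 }

/-- Topological entropy of a subshift. -/
noncomputable def hTop (X : Set (ℤ → A)) : ℝ :=
  limsup (fun n : ℕ => Real.log (Nat.card ↥(Lang X n)) / (n : ℝ)) atTop

/-- Follower set of the finite word `w = A₋ₙ…A₀` (listed from `A₋ₙ` to `A₀`):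
the set of one-sided sequences `B₀B₁B₂…` with `B ∈ X` and `B₋ₙ…B₀ = A₋ₙ…A₀`,
realized by requiring `w` to occur in `B` at positions `0,…,n` and reading off
the tail of `B` starting at the position of the last letter of `w`.
For the empty word this gives `X₊` (by shift-invariance). -/
def fol (X : Set (ℤ → A)) (w : List A) : Set (ℕ → A) :=
  { y | ∃ B ∈ X, (∀ i : Fin w.length, B ((i : ℕ) : ℤ) = w.get i) ∧
        ∀ k : ℕ, y k = B ((w.length : ℤ) - 1 + (k : ℤ)) }

/-- `w = A₋ₙ…A₀` is a left constraint:
`∅ ≠ fol(A₋ₙ…A₀) ⊊ fol(A₋ₙ₊₁…A₀)`. -/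
def IsLeftConstraint (X : Set (ℤ → A)) (w : List A) : Prop :=
  w ≠ [] ∧ fol X w ≠ ∅ ∧ fol X w ⊂ fol X w.tail

/-- `𝒞(X, n)`: the set of left constraints of length `n`. -/
def LC (X : Set (ℤ → A)) (n : ℕ) : Set (List A) :=
  { w | w.length = n ∧ IsLeftConstraint X w }

/-- The left constraint entropy `h_𝒞(X) = limsup (1/n) log⁺ #𝒞(X,n)`. -/
noncomputable def hC (X : Set (ℤ → A)) : ℝ :=
  limsup (fun n : ℕ => max 0 (Real.log (Nat.card ↥(LC X n))) / (n : ℝ)) atTop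

/-- The time-reversed subshift `X̄`. -/
def rev (X : Set (ℤ → A)) : Set (ℤ → A) :=
  (fun x : ℤ → A => fun n : ℤ => x (-n)) '' X

/-- The symmetric constraint entropy `h_𝒮𝒞(X) = min (h_𝒞(X), h_𝒞(X̄))`. -/
noncomputable def hSC (X : Set (ℤ → A)) : ℝ := min (hC X) (hC (rev X))

/-- Subshift of quasi-finite type: `h_𝒮𝒞(X) < h_top(X)`. -/
def IsQFT [TopologicalSpace A] (X : Set (ℤ → A)) : Prop :=
  IsSubshift X ∧ hSC X < hTop X

/-- The word `B₋ₘ…B₀` read off from a one-sided past `b` (where `b j = B₋ⱼ`). -/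
def wordOf (b : ℕ → A) (m : ℕ) : List A :=
  (List.range (m + 1)).map fun j => b (m - j)

/-- An extendable left constraint: a left constraint `A₋ₙ…A₀` which admits a
one-sided past `B` extending it such that `B₋ₘ…B₀` is again a left constraint
for infinitely many `m`. -/
def IsExtendable (X : Set (ℤ → A)) (w : List A) : Prop :=
  IsLeftConstraint X w ∧
  ∃ b : ℕ → A, wordOf b (w.length - 1) = w ∧
    ∀ N : ℕ, ∃ m, N ≤ m ∧ IsLeftConstraint X (wordOf b m)

/-- `𝒞*(X, n)`: the set of extendable left constraints of length `n`. -/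
def ELC (X : Set (ℤ → A)) (n : ℕ) : Set (List A) :=
  { w | w.length = n ∧ IsExtendable X w }

/-- The extendable left constraint entropy `h*_𝒞(X)`. -/
noncomputable def hCstar (X : Set (ℤ → A)) : ℝ :=
  limsup (fun n : ℕ => Real.log (Nat.card ↥(ELC X n)) / (n : ℝ)) atTop

/-- `h*_𝒮𝒞(X) = min (h*_𝒞(X), h*_𝒞(X̄))`. -/
noncomputable def hSCstar (X : Set (ℤ → A)) : ℝ := min (hCstar X) (hCstar (rev X))

/-- Subshift of weak quasi-finite type: `h*_𝒮𝒞(X) < h_top(X)`. -/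
def IsWeakQFT [TopologicalSpace A] (X : Set (ℤ → A)) : Prop :=
  IsSubshift X ∧ hSCstar X < hTop X

/-- Subshift of finite type: defined by excluding a finite set of finite words. -/
def IsSFT (X : Set (ℤ → A)) : Prop :=
  ∃ F : Finset (List A), X = { x | ∀ w ∈ F, ∀ k : ℤ, ¬ OccursAt w x k }

/-- Sofic subshift: the image of an SFT under a continuous shift-commuting map. -/
def IsSofic [TopologicalSpace A] (X : Set (ℤ → A)) : Prop :=
  ∃ (B : Type) (_ : Fintype B) (Y : Set (ℤ → B)) (π : (ℤ → B) → (ℤ → A)),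
    IsSFT Y ∧
    (letI : TopologicalSpace B := ⊥
     Continuous π) ∧
    (∀ x : ℤ → B, π (shift x) = shift (π x)) ∧ π '' Y = X


/-- Topological conjugacy of subshifts: a homeomorphism commuting with the shifts. -/
def Conjugate [TopologicalSpace A] [TopologicalSpace B]
    (X : Set (ℤ → A)) (Y : Set (ℤ → B)) : Prop :=
  ∃ φ : X ≃ₜ Y, ∀ x x' : X, (x' : ℤ → A) = shift (x : ℤ → A) →
    (φ x' : ℤ → B) = shift (φ x : ℤ → B)

/-- The cylinder of a word of length `n` placed at positions `0,…,n-1`. -/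
def cylSet (n : ℕ) (w : Fin n → A) : Set (ℤ → A) :=
  { x | ∀ i : Fin n, x ((i : ℕ) : ℤ) = w i }

/-- Entropy of the partition of `A^ℤ` into cylinders of length `n`. -/
noncomputable def blockEntropy [Fintype A] [MeasurableSpace A]
    (μ : Measure (ℤ → A)) (n : ℕ) : ℝ :=
  ∑ w : Fin n → A, Real.negMulLog ((μ (cylSet n w)).toReal)

/-- Kolmogorov–Sinai entropy of a shift-invariant measure on `A^ℤ`,
computed with the natural (generating) partition into cylinders. -/
noncomputable def KSEntropy [Fintype A] [MeasurableSpace A]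
    (μ : Measure (ℤ → A)) : ℝ :=
  ⨅ n : ℕ, blockEntropy μ (n + 1) / (n + 1)

/-- A maximum measure: an ergodic shift-invariant Borel probability measure
carried by `X` whose Kolmogorov–Sinai entropy equals the topological entropy of `X`. -/
def IsMaxMeasure [Fintype A] [MeasurableSpace A]
    (X : Set (ℤ → A)) (μ : Measure (ℤ → A)) : Prop :=
  IsProbabilityMeasure μ ∧ μ Xᶜ = 0 ∧ Ergodic shift μ ∧ KSEntropy μ = hTop X

/-- The number of points of `X` fixed by the `n`-th power of the shift. -/
noncomputable def perCount (X : Set (ℤ → A)) (n : ℕ) : ℕ :=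
  Nat.card {x : ℤ → A | x ∈ X ∧ shift^[n] x = x}

/-- The set of minimal forbidden words of length `n`: words not occurring in
`X` both of whose maximal proper subwords occur in `X`. -/
def MinForbidden (X : Set (ℤ → A)) (n : ℕ) : Set (List A) :=
  { w | w.length = n ∧ w ∉ Lang X n ∧
        w.dropLast ∈ Lang X (n - 1) ∧ w.tail ∈ Lang X (n - 1) }

/-- The entropy of minimal forbidden words `h_ℳ(X)`. -/
noncomputable def hM (X : Set (ℤ → A)) : ℝ :=
  limsup (fun n : ℕ =>
    max 0 (Real.log (Nat.card ↥(MinForbidden X n))) / (n : ℝ)) atTop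

/-- Rank of a letter: `0, 1` have rank `0`, `2` has rank `1`, `3` has rank `2`. -/
def rk (a : Fin 4) : ℕ := a.val - 1

/-- The pattern `1 v 2^(n^2) 3` with `v` of length `n - 1` over `{0,1}`, the first `2` at `p`. -/
def Bad (x : ℤ → Fin 4) (p : ℤ) (n : ℕ) : Prop :=
  x (p - n) = 1 ∧ rk (x (p - 1)) = 0 ∧ x p = 2 ∧
    x (p + (n : ℤ) ^ 2 - 1) = 2 ∧ x (p + (n : ℤ) ^ 2) = 3

/-- The example subshift. -/
def XX : Set (ℤ → Fin 4) :=
  {x | (∀ i, rk (x i) ≤ rk (x (i + 1))) ∧ ∀ (p : ℤ) (n : ℕ), 1 ≤ n → ¬ Bad x p n}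

theorem rk_zero : rk 0 = 0 := rfl
theorem rk_one : rk 1 = 0 := rfl
theorem rk_two : rk 2 = 1 := rfl
theorem rk_three : rk 3 = 2 := rfl
theorem eq_two_of_rk (a : Fin 4) (h : rk a = 1) : a = 2 := by
  revert a; decide
theorem eq_three_of_rk (a : Fin 4) (h : rk a = 2) : a = 3 := by
  revert a; decide
theorem eq_of_rk_zero (a : Fin 4) (h : rk a = 0) : a = 0 ∨ a = 1 := by
  revert a; decide
theorem rk_le_two (a : Fin 4) : rk a ≤ 2 := by
  revert a; decide

theorem XX_mono {x : ℤ → Fin 4} (hx : x ∈ XX) : Monotone (fun i => rk (x i)) :=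
  monotone_int_of_le_succ hx.1

theorem XX_translate {x : ℤ → Fin 4} (hx : x ∈ XX) (c : ℤ) : (fun i => x (i + c)) ∈ XX := by
  refine ⟨fun i => ?_, fun p n hn hb => hx.2 (p + c) n hn ?_⟩
  · have := hx.1 (i + c)
    rwa [show i + c + 1 = i + 1 + c by ring] at this
  · obtain ⟨h1, h2, h3, h4, h5⟩ := hb
    refine ⟨?_, ?_, h3, ?_, ?_⟩
    · rw [← h1]; congr 1; ring
    · rw [← h2]; congr 2; ring
    · rw [← h4]; congr 1; ring
    · rw [← h5]; congr 1; ring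

theorem XX_isSubshift :
    letI : TopologicalSpace (Fin 4) := ⊥
    IsSubshift XX := by
  letI : TopologicalSpace (Fin 4) := ⊥
  haveI : DiscreteTopology (Fin 4) := ⟨rfl⟩
  constructor
  · have key : ∀ (i : ℤ) (S : Set (Fin 4)), IsClopen {x : ℤ → Fin 4 | x i ∈ S} := fun i S =>
      (isClopen_discrete S).preimage (continuous_apply i)
    have e : XX = (⋂ i : ℤ, ⋂ a : Fin 4, {x | x i ∈ ({a}ᶜ : Set (Fin 4))} ∪
          {x | x (i + 1) ∈ {b | rk a ≤ rk b}}) ∩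
        ⋂ p : ℤ, ⋂ n : ℕ, ⋂ _ : 1 ≤ n, ({x | x (p - n) ∈ ({1} : Set (Fin 4))} ∩
          ({x | x (p - 1) ∈ {b | rk b = 0}} ∩ ({x | x p ∈ ({2} : Set (Fin 4))} ∩
          ({x | x (p + (n : ℤ) ^ 2 - 1) ∈ ({2} : Set (Fin 4))} ∩
            {x | x (p + (n : ℤ) ^ 2) ∈ ({3} : Set (Fin 4))}))))ᶜ := by
      ext x
      simp only [XX, Bad, mem_setOf_eq, mem_inter_iff, mem_iInter, mem_union, mem_compl_iff,
        mem_singleton_iff]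
      refine and_congr ⟨fun h i a => ?_, fun h i => ?_⟩ Iff.rfl
      · by_cases ha : x i = a
        · right; rw [← ha]; exact h i
        · left; exact ha
      · rcases h i (x i) with h | h
        · exact absurd rfl h
        · exact h
    rw [e]
    refine IsClosed.inter ?_ ?_
    · exact isClosed_iInter fun i => isClosed_iInter fun a =>
        ((key _ _).1.union (key _ _).1)
    · refine isClosed_iInter fun p => isClosed_iInter fun n => isClosed_iInter fun _ => ?_
      exact ((key _ _).inter ((key _ _).inter ((key _ _).inter
        ((key _ _).inter (key _ _))))).compl.1
  · ext x
    constructor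
    · rintro ⟨y, hy, rfl⟩
      exact XX_translate hy 1
    · intro hx
      refine ⟨fun i => x (i + (-1)), XX_translate hx (-1), ?_⟩
      funext i
      simp [shift]

theorem occurs_iff (w : List (Fin 4)) (x : ℤ → Fin 4) :
    OccursAt w x 0 ↔ ∀ i : ℕ, i < w.length → x i = w.getD i 0 := by
  constructor
  · intro h i hi
    have := h ⟨i, hi⟩
    simpa [hi] using this
  · intro h i
    have := h i i.2
    simpa using this

/-! ### Minimal forbidden words -/

/-- Structure of long minimal forbidden words. -/
theorem minForbidden_structure {N : ℕ} (hN : 3 ≤ N) {w : List (Fin 4)}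
    (hw : w ∈ MinForbidden XX N) :
    ∃ n : ℕ, n + n ^ 2 + 1 = N ∧ (∀ i, n ≤ i → i + 1 < N → w.getD i 0 = 2) ∧
      w.getD (N - 1) 0 = 3 := by
  obtain ⟨hl, hnot, ⟨hd, x, hx, hxw⟩, ⟨ht, y, hy, hyw⟩⟩ := hw
  rw [occurs_iff] at hxw hyw
  have hxw' : ∀ i : ℕ, i + 1 < N → x i = w.getD i 0 := by
    intro i hi
    rw [hxw i (by omega)]
    have h1 : i < w.length := by omega
    have h2 : i < w.length - 1 := by omega
    simp [h1, h2, List.getElem?_dropLast]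
  have hyw' : ∀ i : ℕ, i + 1 < N → y i = w.getD (i + 1) 0 := by
    intro i hi
    rw [hyw i (by omega)]
    simp
  set g : ℕ → Fin 4 := fun i => w.getD i 0 with hg
  have gmono : ∀ i : ℕ, i + 1 < N → rk (g i) ≤ rk (g (i + 1)) := by
    intro i hi
    by_cases h : i + 2 < N
    · have := hx.1 i
      rw [hxw' i (by omega)] at this
      have h2 := hxw' (i + 1) (by omega)
      push_cast at h2
      rw [h2] at this
      exact this
    · obtain ⟨j, rfl⟩ : ∃ j, i = j + 1 := ⟨i - 1, by omega⟩
      have := hy.1 j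
      rw [hyw' j (by omega)] at this
      have h2 := hyw' (j + 1) (by omega)
      push_cast at h2
      rw [h2] at this
      exact this
  have gmono' : ∀ i j : ℕ, i ≤ j → j < N → rk (g i) ≤ rk (g j) := by
    intro i j hij
    induction j, hij using Nat.le_induction with
    | base => intro _; exact le_rfl
    | succ j hj ih => intro h; exact (ih (by omega)).trans (gmono j h)
  -- the canonical extension of the word
  let z : ℤ → Fin 4 := fun i =>
    if i < 0 then (if rk (g 0) = 0 then 0 else g 0)
    else if i < N then g i.toNat else g (N - 1)
  have zneg : ∀ i : ℤ, i < 0 → z i = (if rk (g 0) = 0 then 0 else g 0) := by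
    intro i hi; simp only [z, if_pos hi]
  have zin : ∀ i : ℕ, i < N → z i = g i := by
    intro i hi
    have h1 : ¬ ((i : ℤ) < 0) := by omega
    have h2 : (i : ℤ) < N := by omega
    simp only [z, if_neg h1, if_pos h2, Int.toNat_natCast]
  have zbig : ∀ i : ℤ, (N : ℤ) - 1 ≤ i → z i = g (N - 1) := by
    intro i hi
    have h1 : ¬ (i < 0) := by omega
    by_cases h2 : i < N
    · have : i.toNat = N - 1 := by omega
      simp only [z, if_neg h1, if_pos h2, this]
    · simp only [z, if_neg h1, if_neg h2]
  have znegrk : rk (if rk (g 0) = 0 then 0 else g 0) = rk (g 0) := by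
    split_ifs with h
    · rw [h]; rfl
    · rfl
  have znegne : (if rk (g 0) = 0 then 0 else g 0) ≠ 1 := by
    split_ifs with h
    · decide
    · intro h'; rw [h'] at h; exact h rfl
  have zmono : ∀ i, rk (z i) ≤ rk (z (i + 1)) := by
    intro i
    rcases lt_or_ge i (-1) with h | h
    · rw [zneg i (by omega), zneg (i + 1) (by omega)]
    rcases eq_or_lt_of_le h with h | h
    · subst h
      rw [zneg (-1) (by omega), znegrk]
      have := zin 0 (by omega)
      simp only [Nat.cast_zero] at this
      simp [this]
    rcases lt_or_ge i ((N : ℤ) - 1) with h' | h'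
    · obtain ⟨k, rfl⟩ : ∃ k : ℕ, i = k := ⟨i.toNat, by omega⟩
      rw [zin k (by omega)]
      have h2 := zin (k + 1) (by omega)
      push_cast at h2
      rw [h2]
      exact gmono k (by omega)
    · rw [zbig i (by omega), zbig (i + 1) (by omega)]
  have hz : z ∉ XX := by
    intro hz
    refine hnot ⟨hl, z, hz, ?_⟩
    rw [occurs_iff]
    intro i hi
    exact zin i (by omega)
  have : ∃ (p : ℤ) (n : ℕ), 1 ≤ n ∧ Bad z p n := by
    by_contra hcon
    push Not at hcon
    exact hz ⟨zmono, hcon⟩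
  obtain ⟨p, n, hn, h1, h2, h3, h4, h5⟩ := this
  have hn2 : (1 : ℤ) ≤ (n : ℤ) ^ 2 := by
    have : (1 : ℤ) ≤ n := by exact_mod_cast hn
    nlinarith
  set q : ℤ := (n : ℤ) ^ 2 with hq
  have ha : 0 ≤ p - n := by
    by_contra h
    rw [zneg _ (by omega)] at h1
    exact znegne h1
  have hb : p + q ≤ N - 1 := by
    by_contra h
    rw [zbig _ (by omega)] at h4 h5
    rw [h4] at h5
    exact absurd h5 (by decide)
  have zin' : ∀ i : ℤ, 0 ≤ i → i < N → z i = g i.toNat := by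
    intro i hi hi'
    have := zin i.toNat (by omega)
    rwa [Int.toNat_of_nonneg hi] at this
  have zx : ∀ i : ℤ, 0 ≤ i → i < (N : ℤ) - 1 → z i = x i := by
    intro i hi hi'
    obtain ⟨k, rfl⟩ : ∃ k : ℕ, i = k := ⟨i.toNat, by omega⟩
    rw [zin k (by omega), hxw' k (by omega)]
  have zy : ∀ i : ℤ, 1 ≤ i → i < (N : ℤ) → z i = y (i - 1) := by
    intro i hi hi'
    obtain ⟨k, rfl⟩ : ∃ k : ℕ, i = k + 1 := ⟨(i - 1).toNat, by omega⟩
    have h := zin (k + 1) (by omega)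
    push_cast at h
    rw [h, add_sub_cancel_right, hyw' k (by omega)]
  have hpn : p = n := by
    by_contra hne
    refine hy.2 (p - 1) n hn ⟨?_, ?_, ?_, ?_, ?_⟩
    · rw [zy _ (by omega) (by omega)] at h1; rw [← h1]; congr 1; ring
    · rw [zy _ (by omega) (by omega)] at h2; rw [← h2]
    · rw [zy _ (by omega) (by omega)] at h3; rw [← h3]
    · rw [zy _ (by omega) (by omega)] at h4; rw [← h4]; congr 1; ring
    · rw [zy _ (by omega) (by omega)] at h5; rw [← h5]; congr 1; ring
  have hpN : p + q = N - 1 := by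
    by_contra hne
    refine hx.2 p n hn ⟨?_, ?_, ?_, ?_, ?_⟩
    · rw [zx _ (by omega) (by omega)] at h1; exact h1
    · rw [zx _ (by omega) (by omega)] at h2; exact h2
    · rw [zx _ (by omega) (by omega)] at h3; exact h3
    · rw [zx _ (by omega) (by omega)] at h4; exact h4
    · rw [zx _ (by omega) (by omega)] at h5; exact h5
  refine ⟨n, ?_, ?_, ?_⟩
  · have : ((n + n ^ 2 + 1 : ℕ) : ℤ) = N := by push_cast; omega
    exact_mod_cast this
  · intro i hi hi'
    apply eq_two_of_rk
    have e3 : g n = 2 := by rw [hpn, zin n (by omega)] at h3; exact h3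
    have e4 : g (N - 2) = 2 := by
      rw [show p + q - 1 = ((N - 2 : ℕ) : ℤ) by omega, zin _ (by omega)] at h4; exact h4
    have l1 := gmono' n i hi (by omega)
    have l2 := gmono' i (N - 2) (by omega) (by omega)
    rw [e3, rk_two] at l1
    rw [e4, rk_two] at l2
    exact le_antisymm l2 l1
  · rw [show p + q = ((N - 1 : ℕ) : ℤ) by omega, zin _ (by omega)] at h5; exact h5

theorem minForbidden_card {N : ℕ} (hN : 3 ≤ N) :
    Nat.card ↥(MinForbidden XX N) ≤ 4 ^ (Nat.sqrt N) := by
  let F : ↥(MinForbidden XX N) → (Fin (Nat.sqrt N) → Fin 4) := fun w i => w.1.getD i 0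
  have hF : Function.Injective F := by
    rintro ⟨w, hw⟩ ⟨v, hv⟩ h
    have hwl := hw.1
    have hvl := hv.1
    obtain ⟨n, hn, hn2, hn3⟩ := minForbidden_structure hN hw
    obtain ⟨m, hm, hm2, hm3⟩ := minForbidden_structure hN hv
    have hns : n ≤ Nat.sqrt N := by rw [Nat.le_sqrt']; omega
    have hms : m ≤ Nat.sqrt N := by rw [Nat.le_sqrt']; omega
    have key : ∀ i, i < N → w.getD i 0 = v.getD i 0 := by
      intro i hi
      by_cases h1 : i < Nat.sqrt N
      · exact congrFun h ⟨i, h1⟩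
      by_cases h2 : i + 1 < N
      · rw [hn2 i (by omega) h2, hm2 i (by omega) h2]
      · have : i = N - 1 := by omega
        rw [this, hn3, hm3]
    apply Subtype.ext
    apply List.ext_getElem (by simp [hwl, hvl])
    intro i h1 h2
    have := key i (by simpa [hwl] using h1)
    simpa [h1, h2] using this
  have := Nat.card_le_card_of_injective F hF
  simpa using this

theorem hM_XX : hM XX = 0 := by
  apply Tendsto.limsup_eq
  have hs : Tendsto (fun n : ℕ => Real.log 4 * (1 / Real.sqrt n)) atTop (nhds 0) := by
    have h1 : Tendsto (fun n : ℕ => Real.sqrt (n : ℝ)) atTop atTop :=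
      Real.tendsto_sqrt_atTop.comp tendsto_natCast_atTop_atTop
    have h2 := (tendsto_const_nhds (x := (1 : ℝ))).div_atTop h1
    simpa using h2.const_mul (Real.log 4)
  refine tendsto_of_tendsto_of_tendsto_of_le_of_le' tendsto_const_nhds hs ?_ ?_
  · filter_upwards with n
    positivity
  · filter_upwards [eventually_ge_atTop 3] with N hN
    have hNpos : (0 : ℝ) < N := by positivity
    have hsq : 0 < Real.sqrt N := Real.sqrt_pos.mpr hNpos
    have hlog : Real.log (Nat.card ↥(MinForbidden XX N)) ≤ Real.sqrt N * Real.log 4 := by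
      rcases Nat.eq_zero_or_pos (Nat.card ↥(MinForbidden XX N)) with h0 | h0
      · rw [h0]; simp; positivity
      · calc Real.log (Nat.card ↥(MinForbidden XX N)) ≤ Real.log ((4 : ℝ) ^ (Nat.sqrt N)) := by
              apply Real.log_le_log (by exact_mod_cast h0)
              exact_mod_cast minForbidden_card hN
          _ = (Nat.sqrt N : ℝ) * Real.log 4 := by rw [Real.log_pow]
          _ ≤ Real.sqrt N * Real.log 4 := by
              apply mul_le_mul_of_nonneg_right Real.nat_sqrt_le_real_sqrt
              positivity
    rw [div_le_iff₀ hNpos]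
    have e : Real.log 4 * (1 / Real.sqrt N) * N = Real.sqrt N * Real.log 4 := by
      have : (N : ℝ) = Real.sqrt N * Real.sqrt N := (Real.mul_self_sqrt hNpos.le).symm
      field_simp
      rw [Real.sq_sqrt hNpos.le]
    rw [e]
    exact max_le (by positivity) hlog

/-! ### Upper bound for the language -/

theorem threshold (P : ℕ → Prop) (N : ℕ) (hP : ∀ i, i + 1 < N → P (i + 1) → P i) :
    ∃ a : Fin (N + 1), ∀ i, i < N → (P i ↔ i < (a : ℕ)) := by
  induction N with
  | zero => exact ⟨0, fun i hi => by omega⟩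
  | succ N ih =>
    obtain ⟨a, ha⟩ := ih (fun i hi => hP i (by omega))
    by_cases h : P N
    · refine ⟨⟨N + 1, by omega⟩, ?_⟩
      have all : ∀ k, k ≤ N → P (N - k) := by
        intro k
        induction k with
        | zero => intro _; exact h
        | succ k ihk =>
          intro hk
          apply hP _ (by omega)
          rw [show N - (k + 1) + 1 = N - k by omega]
          exact ihk (by omega)
      intro i hi
      have := all (N - i) (by omega)
      rw [show N - (N - i) = i by omega] at this
      simp [this, hi]
    · refine ⟨⟨a, by omega⟩, fun i hi => ?_⟩
      rcases Nat.lt_succ_iff_lt_or_eq.mp hi with h' | h'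
      · exact ha i h'
      · subst h'
        have := a.2
        simp only [h, false_iff]
        show ¬ (i < (a : ℕ))
        omega

/-- A parametrization covering all words of length `N` of the language. -/
def par (N : ℕ) (t : (Fin (N + 1) × Fin (N + 1)) × (Fin N → Bool)) : List (Fin 4) :=
  List.ofFn fun i : Fin N =>
    if (i : ℕ) < (t.1.1 : ℕ) then (if t.2 i then 1 else 0)
    else if (i : ℕ) < (t.1.2 : ℕ) then 2 else 3

theorem lang_subset (N : ℕ) : Lang XX N ⊆ Set.range (par N) := by
  rintro w ⟨hl, x, hx, hxw⟩
  rw [occurs_iff] at hxw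
  obtain ⟨a, ha⟩ := threshold (fun i => rk (x i) = 0) N (by
    intro i _ h
    have := hx.1 i
    push_cast at h
    omega)
  obtain ⟨b, hb⟩ := threshold (fun i => rk (x i) ≤ 1) N (by
    intro i _ h
    have := hx.1 i
    push_cast at h
    omega)
  refine ⟨((a, b), fun i => decide (x (i : ℕ) = 1)), ?_⟩
  apply List.ext_getElem (by simp [par, hl])
  intro i h1 h2
  have hi : i < N := by omega
  have hx1 := hxw i h2
  have e : w[i] = x i := by rw [hx1]; simp [h2]
  rw [e]
  simp only [par, List.getElem_ofFn]
  have ha' := ha i hi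
  have hb' := hb i hi
  by_cases c1 : i < (a : ℕ)
  · rw [if_pos c1]
    rcases eq_of_rk_zero _ (ha'.2 c1) with h | h <;> simp [h]
  · rw [if_neg c1]
    have n0 : rk (x i) ≠ 0 := fun h => c1 (ha'.1 h)
    by_cases c2 : i < (b : ℕ)
    · rw [if_pos c2]
      have := hb'.2 c2
      exact (eq_two_of_rk _ (by omega)).symm
    · rw [if_neg c2]
      have : ¬ rk (x i) ≤ 1 := fun h => c2 (hb'.1 h)
      have h2 := rk_le_two (x i)
      exact (eq_three_of_rk _ (by omega)).symm

theorem lang_finite (N : ℕ) : (Lang XX N).Finite :=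
  (Set.finite_range (par N)).subset (lang_subset N)

theorem lang_card (N : ℕ) : Nat.card ↥(Lang XX N) ≤ (N + 1) ^ 2 * 2 ^ N := by
  have h1 : Nat.card ↥(Lang XX N) ≤ Nat.card ↥(Set.range (par N)) :=
    Nat.card_mono (Set.finite_range _) (lang_subset N)
  have h2 : Nat.card ↥(Set.range (par N)) ≤
      Nat.card ((Fin (N + 1) × Fin (N + 1)) × (Fin N → Bool)) :=
    Finite.card_range_le _
  have h3 : Nat.card ((Fin (N + 1) × Fin (N + 1)) × (Fin N → Bool)) = (N + 1) ^ 2 * 2 ^ N := by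
    simp; ring
  omega

/-! ### Extendable left constraints -/

theorem elc_subset (N : ℕ) : ELC XX N ⊆ Lang XX N := by
  rintro w ⟨hl, ⟨_, hne, _⟩, _⟩
  obtain ⟨y, B, hB, hBw, _⟩ := Set.nonempty_iff_ne_empty.mpr hne
  refine ⟨hl, B, hB, fun i => ?_⟩
  rw [zero_add]
  exact hBw i

theorem wordOf_length (b : ℕ → Fin 4) (m : ℕ) : (wordOf b m).length = m + 1 := by
  simp [wordOf]

theorem wordOf_getElem (b : ℕ → Fin 4) (m i : ℕ) (h : i < (wordOf b m).length) :
    (wordOf b m)[i] = b (m - i) := by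
  simp [wordOf]

theorem wordOf_constraint (b : ℕ → Fin 4) (hb : ∀ j, rk (b j) = 0) (m : ℕ) (hbm : b m = 1) :
    IsLeftConstraint XX (wordOf b m) := by
  have hlen := wordOf_length b m
  have htl : (wordOf b m).tail.length = m := by simp [hlen]
  refine ⟨?_, ?_, ?_, ?_⟩
  · intro h; rw [h] at hlen; simp at hlen
  · apply Set.Nonempty.ne_empty
    refine ⟨_, fun i => b (m - i).toNat, ⟨fun i => ?_, fun p n _ hbad => ?_⟩, fun i => ?_,
      fun k => rfl⟩
    · rw [hb, hb]
    · have h := hb (m - p).toNat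
      have h3 : b (m - p).toNat = 2 := hbad.2.2.1
      rw [h3] at h
      exact absurd h (by decide)
    · have hi := i.2
      rw [List.get_eq_getElem, wordOf_getElem]
      show b ((m : ℤ) - ((i : ℕ) : ℤ)).toNat = b (m - i)
      congr 1
      omega
  · rintro y ⟨B, hB, hBw, hy⟩
    refine ⟨fun i => B (i + 1), XX_translate hB 1, fun i => ?_, fun k => ?_⟩
    · have hi : (i : ℕ) + 1 < (wordOf b m).length := by have := i.2; omega
      have := hBw ⟨i + 1, hi⟩
      simp only [List.get_eq_getElem, List.getElem_tail] at this ⊢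
      rw [← this]
      push_cast
      rfl
    · rw [hy k]
      congr 1
      rw [hlen, htl]
      push_cast
      ring
  · intro hsub
    set Q : ℕ := (m + 1) ^ 2 with hQ
    have hQ1 : 1 ≤ Q := Nat.one_le_pow _ _ (by omega)
    let B : ℤ → Fin 4 := fun i =>
      if i < 0 then 0 else if i < m then b (m - 1 - i).toNat else if i < m + Q then 2 else 3
    have rB0 : ∀ i : ℤ, i < m → rk (B i) = 0 := by
      intro i hi
      by_cases h : i < 0
      · simp only [B, if_pos h]; rfl
      · simp only [B, if_neg h, if_pos hi, hb]
    have B2 : ∀ i : ℤ, (m : ℤ) ≤ i → i < m + Q → B i = 2 := by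
      intro i h1 h2
      simp only [B, if_neg (show ¬ i < 0 by omega), if_neg (show ¬ i < m by omega), if_pos h2]
    have B3 : ∀ i : ℤ, (m : ℤ) + Q ≤ i → B i = 3 := by
      intro i h1
      simp only [B, if_neg (show ¬ i < 0 by omega), if_neg (show ¬ i < m by omega),
        if_neg (show ¬ i < m + Q by omega)]
    have B2' : ∀ i : ℤ, B i = 2 → (m : ℤ) ≤ i ∧ i < m + Q := by
      intro i h
      constructor
      · by_contra hc
        have := rB0 i (by omega)
        rw [h] at this
        exact absurd this (by decide)
      · by_contra hc
        rw [B3 i (by omega)] at h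
        exact absurd h (by decide)
    have hBX : B ∈ XX := by
      refine ⟨fun i => ?_, ?_⟩
      · rcases lt_or_ge i m with h | h
        · rw [rB0 i h]; exact Nat.zero_le _
        rcases lt_or_ge i (m + Q) with h' | h'
        · rw [B2 i h h']
          rcases lt_or_ge (i + 1) (m + Q) with h'' | h''
          · rw [B2 (i + 1) (by omega) h'']
          · rw [B3 (i + 1) h'']; decide
        · rw [B3 i h', B3 (i + 1) (by omega)]
      · rintro p n hn ⟨h1, h2, h3, h4, h5⟩
        have k3 := B2' _ h3
        have k4 := B2' _ h4
        have kp : p = m := by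
          by_contra hne
          rw [B2 (p - 1) (by omega) (by omega)] at h2
          exact absurd h2 (by decide)
        have kq : p + (n : ℤ) ^ 2 = m + Q := by
          by_contra hne
          rw [B2 _ (by omega) (by omega)] at h5
          exact absurd h5 (by decide)
        have : (n : ℤ) ^ 2 = ((m + 1 : ℕ) : ℤ) ^ 2 := by
          have : (Q : ℤ) = ((m + 1 : ℕ) : ℤ) ^ 2 := by rw [hQ]; push_cast; ring
          omega
        have hnm : n = m + 1 := by
          have h' : n ^ 2 = (m + 1) ^ 2 := by exact_mod_cast this
          exact Nat.pow_left_injective (by norm_num : (2 : ℕ) ≠ 0) h'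
        have : B (p - n) = 0 := by
          have hlt : p - n < 0 := by omega
          simp only [B, if_pos hlt]
        rw [this] at h1
        exact absurd h1 (by decide)
    -- the continuation, allowed after the tail but not after the word
    have hyt : (fun k : ℕ => B ((m : ℤ) - 1 + k)) ∈ fol XX (wordOf b m).tail := by
      refine ⟨B, hBX, fun i => ?_, fun k => ?_⟩
      · have hi : (i : ℕ) < m := by have := i.2; omega
        simp only [List.get_eq_getElem, List.getElem_tail, wordOf_getElem]
        simp only [B, if_neg (show ¬ ((i : ℕ) : ℤ) < 0 by omega),
          if_pos (show ((i : ℕ) : ℤ) < m by omega)]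
        congr 1
        omega
      · rw [htl]
    obtain ⟨C, hC, hCw, hCy⟩ := hsub hyt
    rw [hlen] at hCy
    have hC' : ∀ k : ℕ, C ((m : ℤ) + k) = B ((m : ℤ) - 1 + k) := by
      intro k
      have h := hCy k
      simp only at h
      rw [h]
      congr 1
      push_cast
      ring
    have hCw' : ∀ i : ℕ, i ≤ m → C i = b (m - i) := by
      intro i hi
      have := hCw ⟨i, by omega⟩
      simpa [wordOf_getElem] using this
    have hQc : (((m + 1 : ℕ) : ℤ)) ^ 2 = Q := by rw [hQ]; push_cast; ring
    refine hC.2 ((m + 1 : ℕ) : ℤ) (m + 1) (by omega) ⟨?_, ?_, ?_, ?_, ?_⟩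
    · have := hCw' 0 (by omega)
      simp only [Nat.cast_zero, Nat.sub_zero] at this
      rw [sub_self, this, hbm]
    · have := hCw' m le_rfl
      rw [show (((m + 1 : ℕ) : ℤ)) - 1 = (m : ℤ) by push_cast; ring, this]
      exact hb _
    · have := hC' 1
      rw [show (((m + 1 : ℕ) : ℤ)) = (m : ℤ) + (1 : ℕ) by push_cast; ring, this]
      exact B2 _ (by omega) (by omega)
    · have := hC' Q
      rw [hQc, show (((m + 1 : ℕ) : ℤ)) + Q - 1 = (m : ℤ) + Q by push_cast; ring, this]
      exact B2 _ (by omega) (by omega)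
    · have := hC' (Q + 1)
      rw [hQc, show (((m + 1 : ℕ) : ℤ)) + Q = (m : ℤ) + (Q + 1 : ℕ) by push_cast; ring, this]
      exact B3 _ (by omega)

/-- The past with letters given by `f` followed (to the left) by `1`s. -/
def past (k : ℕ) (f : Fin k → Bool) (j : ℕ) : Fin 4 :=
  if h : j < k then (if f ⟨j, h⟩ then 1 else 0) else 1

theorem past_mem (k : ℕ) (f : Fin k → Bool) : wordOf (past k f) k ∈ ELC XX (k + 1) := by
  have h0 : ∀ j, rk (past k f j) = 0 := by
    intro j
    unfold past
    split_ifs <;> rfl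
  have h1 : ∀ m, k ≤ m → past k f m = 1 := by
    intro m hm
    simp [past, hm]
  refine ⟨wordOf_length _ _, wordOf_constraint _ h0 k (h1 k le_rfl), past k f, ?_, fun N => ?_⟩
  · rw [wordOf_length]; rfl
  · exact ⟨max N k, le_max_left _ _, wordOf_constraint _ h0 _ (h1 _ (le_max_right _ _))⟩

theorem elc_card (k : ℕ) : 2 ^ k ≤ Nat.card ↥(ELC XX (k + 1)) := by
  have hfin : Finite ↥(ELC XX (k + 1)) := ((lang_finite (k + 1)).subset (elc_subset _)).to_subtype
  let F : (Fin k → Bool) → ↥(ELC XX (k + 1)) := fun f => ⟨wordOf (past k f) k, past_mem k f⟩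
  have hF : Function.Injective F := by
    intro f g h
    have h' : wordOf (past k f) k = wordOf (past k g) k := congrArg Subtype.val h
    funext j
    have hj := j.2
    have e : (wordOf (past k f) k)[k - j]'(by rw [wordOf_length]; omega) =
        (wordOf (past k g) k)[k - j]'(by rw [wordOf_length]; omega) := by
      simp only [h']
    rw [wordOf_getElem, wordOf_getElem, show k - (k - (j : ℕ)) = j by omega] at e
    simp only [past, hj, dif_pos, Fin.eta] at e
    cases hf : f j <;> cases hg : g j <;> simp [hf, hg] at e ⊢
  have := Nat.card_le_card_of_injective F hF
  simpa using this

/-! ### Entropies -/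

theorem lower_tendsto :
    Tendsto (fun n : ℕ => ((n : ℝ) - 1) * Real.log 2 / n) atTop (nhds (Real.log 2)) := by
  have h : Tendsto (fun n : ℕ => Real.log 2 - Real.log 2 / (n : ℝ)) atTop
      (nhds (Real.log 2 - 0)) :=
    tendsto_const_nhds.sub (tendsto_const_nhds.div_atTop tendsto_natCast_atTop_atTop)
  rw [sub_zero] at h
  refine h.congr' ?_
  filter_upwards [eventually_gt_atTop 0] with n hn
  have : (n : ℝ) ≠ 0 := by positivity
  field_simp

theorem upper_tendsto :
    Tendsto (fun n : ℕ => (2 * Real.log ((n : ℝ) + 1) + n * Real.log 2) / n) atTop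
      (nhds (Real.log 2)) := by
  have h1 : Tendsto (fun n : ℕ => Real.log ((n : ℝ) + 1) / ((n : ℝ) + 1)) atTop (nhds 0) := by
    have h := (Real.isLittleO_log_id_atTop.tendsto_div_nhds_zero).comp
      (tendsto_atTop_add_const_right atTop (1 : ℝ) tendsto_natCast_atTop_atTop)
    exact h
  have h2 : Tendsto (fun n : ℕ => 1 + 1 / (n : ℝ)) atTop (nhds (1 + 0)) :=
    tendsto_const_nhds.add (tendsto_const_nhds.div_atTop tendsto_natCast_atTop_atTop)
  have h3 := ((h1.mul h2).const_mul 2).add_const (Real.log 2)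
  rw [zero_mul, mul_zero, zero_add] at h3
  refine h3.congr' ?_
  filter_upwards [eventually_gt_atTop 0] with n hn
  have : (n : ℝ) ≠ 0 := by positivity
  have : (n : ℝ) + 1 ≠ 0 := by positivity
  field_simp

theorem log_elc_lower {n : ℕ} (hn : 0 < n) :
    ((n : ℝ) - 1) * Real.log 2 ≤ Real.log (Nat.card ↥(ELC XX n)) := by
  obtain ⟨k, rfl⟩ : ∃ k, n = k + 1 := ⟨n - 1, by omega⟩
  have h : ((2 : ℝ) ^ k) ≤ (Nat.card ↥(ELC XX (k + 1)) : ℝ) := by exact_mod_cast elc_card k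
  have := Real.log_le_log (by positivity) h
  rw [Real.log_pow] at this
  push_cast
  simpa using this

theorem elc_le_lang (n : ℕ) : Nat.card ↥(ELC XX n) ≤ Nat.card ↥(Lang XX n) :=
  Nat.card_mono (lang_finite n) (elc_subset n)

theorem elc_pos {n : ℕ} (hn : 0 < n) : 0 < Nat.card ↥(ELC XX n) := by
  obtain ⟨k, rfl⟩ : ∃ k, n = k + 1 := ⟨n - 1, by omega⟩
  exact lt_of_lt_of_le (by positivity) (elc_card k)

theorem log_elc_le_lang {n : ℕ} (hn : 0 < n) :
    Real.log (Nat.card ↥(ELC XX n)) ≤ Real.log (Nat.card ↥(Lang XX n)) :=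
  Real.log_le_log (by exact_mod_cast elc_pos hn) (by exact_mod_cast elc_le_lang n)

theorem log_lang_upper {n : ℕ} (hn : 0 < n) :
    Real.log (Nat.card ↥(Lang XX n)) ≤ 2 * Real.log ((n : ℝ) + 1) + n * Real.log 2 := by
  have h : (Nat.card ↥(Lang XX n) : ℝ) ≤ ((n : ℝ) + 1) ^ 2 * 2 ^ n := by
    exact_mod_cast lang_card n
  have := Real.log_le_log
    (by exact_mod_cast lt_of_lt_of_le (elc_pos hn) (elc_le_lang n)) h
  rw [Real.log_mul (by positivity) (by positivity), Real.log_pow, Real.log_pow] at this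
  exact_mod_cast this

theorem hTop_XX : hTop XX = Real.log 2 := by
  apply Tendsto.limsup_eq
  refine tendsto_of_tendsto_of_tendsto_of_le_of_le' lower_tendsto upper_tendsto ?_ ?_
  · filter_upwards [eventually_gt_atTop 0] with n hn
    exact div_le_div_of_nonneg_right ((log_elc_lower hn).trans (log_elc_le_lang hn))
      (Nat.cast_nonneg n)
  · filter_upwards [eventually_gt_atTop 0] with n hn
    exact div_le_div_of_nonneg_right (log_lang_upper hn) (Nat.cast_nonneg n)

theorem hCstar_XX : hCstar XX = Real.log 2 := by
  apply Tendsto.limsup_eq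
  refine tendsto_of_tendsto_of_tendsto_of_le_of_le' lower_tendsto upper_tendsto ?_ ?_
  · filter_upwards [eventually_gt_atTop 0] with n hn
    exact div_le_div_of_nonneg_right (log_elc_lower hn) (Nat.cast_nonneg n)
  · filter_upwards [eventually_gt_atTop 0] with n hn
    exact div_le_div_of_nonneg_right ((log_elc_le_lang hn).trans (log_lang_upper hn))
      (Nat.cast_nonneg n)

/-- There is a subshift with vanishing entropy of minimal
forbidden words and yet `h*_𝒞(X) = h_top(X) > 0`. -/
theorem minForbidden_zero_but_hCstar_full :
    ∃ (A : Type) (_ : Fintype A) (X : Set (ℤ → A)),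
      (letI : TopologicalSpace A := ⊥
       IsSubshift X) ∧
      hM X = 0 ∧ hCstar X = hTop X ∧ 0 < hTop X := by
  refine ⟨Fin 4, inferInstance, XX, XX_isSubshift, hM_XX, ?_, ?_⟩
  · rw [hCstar_XX, hTop_XX]
  · rw [hTop_XX]; exact Real.log_pos (by norm_num)

end QFTPaper
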